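/- Let A be a unital C*-algebra with T(A) nonempty, let G be a discrete group acting on A via α, and suppose there is an integer M ≥ 1 such that every orbit of the induced action α* on T(A) has at most M elements. Let K ⊆ G be a finite nonempty subset, let a_1, …, a_n ∈ A be positive elements, and let δ > 0 satisfy sup_{τ ∈ T(A)^α} min{τ(a_1), …, τ(a_n)} < δ. Define a'_j = |K|^{-1} ∑_{k ∈ K} α_{k^{-1}}(a_j) for j = 1, …, n. Then: (i) τ(a'_j) = τ(a_j) for every τ ∈ T(A)^α and every j; and (ii) sup_{τ ∈ T(A)} min{τ(a'_1), …, τ(a'_n)} < M δ. -/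

import Mathlib

open scoped ComplexOrder

/-- A tracial state on a unital C*-algebra `A`. -/
def IsTracialState {A : Type*} [NormedRing A] [StarRing A] [NormedAlgebra ℂ A]
    (τ : A →L[ℂ] ℂ) : Prop :=
  τ 1 = 1 ∧ (∀ a : A, 0 ≤ τ (star a * a)) ∧ ∀ a b : A, τ (a * b) = τ (b * a)

/-- The orbit `{τ ∘ α_g : g ∈ G}` of a functional `τ` under an action `α` of `G` on `A`. -/
def traceOrbit {A : Type*} [NormedRing A] [StarRing A] [NormedAlgebra ℂ A]
    {G : Type*} (α : G → A ≃⋆ₐ[ℂ] A) (τ : A →L[ℂ] ℂ) : Set (A →L[ℂ] ℂ) :=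
  {σ | ∃ g : G, ∀ a : A, σ a = τ (α g a)}

/-!
Averaging a trace `τ` over its orbit, which has `m ≤ M` elements, gives an invariant trace `σ`.
Every translate `τ ∘ α_g` is one of the `m` positive functionals with sum `m σ`, so on positive
elements it is dominated by `M σ`, and so is any average of translates. Hence
`minⱼ τ(a'ⱼ) ≤ M minⱼ σ(aⱼ)` for every trace `τ`.
-/

theorem inv_card_smul_sum_mem_of_convex {R 𝕜 E ι : Type*} [Field R] [LinearOrder R]
    [IsStrictOrderedRing R] [DivisionRing 𝕜] [AddCommGroup E] [Module R E] [Module 𝕜 E]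
    {S : Set E} (hS : Convex R S) {s : Finset ι} (hs : s.Nonempty) {x : ι → E}
    (hx : ∀ i ∈ s, x i ∈ S) : (s.card : 𝕜)⁻¹ • ∑ i ∈ s, x i ∈ S := by
  have hcard : (s.card : R) ≠ 0 := Nat.cast_ne_zero.mpr hs.card_ne_zero
  rw [inv_natCast_smul_eq 𝕜 R, Finset.smul_sum]
  refine hS.sum_mem (fun _ _ ↦ by positivity) ?_ hx
  rw [Finset.sum_const, nsmul_eq_mul, mul_inv_cancel₀ hcard]

section Traces

variable {A B : Type*} [NormedRing A] [StarRing A] [NormedAlgebra ℂ A]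
  [NormedRing B] [StarRing B] [NormedAlgebra ℂ B]

theorem convex_setOf_isTracialState : Convex ℝ {τ : A →L[ℂ] ℂ | IsTracialState τ} := by
  rintro σ ⟨σ_one, σ_pos, σ_comm⟩ τ ⟨τ_one, τ_pos, τ_comm⟩ s t hs ht hst
  refine ⟨?_, fun a ↦ ?_, fun a b ↦ ?_⟩
  · simp [σ_one, τ_one, ← Complex.ofReal_add, hst]
  · exact add_nonneg (smul_nonneg hs (σ_pos a)) (smul_nonneg ht (τ_pos a))
  · simp [σ_comm a b, τ_comm a b]

namespace IsTracialState

variable {τ : A →L[ℂ] ℂ}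

theorem of_eq_comp {F : Type*} [FunLike F B A] [MonoidHomClass F B A] [StarHomClass F B A]
    (hτ : IsTracialState τ) (φ : F) {σ : B →L[ℂ] ℂ} (hσ : ∀ b, σ b = τ (φ b)) :
    IsTracialState σ := by
  obtain ⟨τ_one, τ_pos, τ_comm⟩ := hτ
  refine ⟨?_, fun a ↦ ?_, fun a b ↦ ?_⟩
  · rw [hσ, map_one, τ_one]
  · rw [hσ, map_mul, map_star]
    exact τ_pos _
  · rw [hσ, hσ, map_mul φ, map_mul φ, τ_comm]

theorem re_apply_star_mul_self_nonneg (hτ : IsTracialState τ) (b : A) :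
    0 ≤ (τ (star b * b)).re :=
  (Complex.le_def.mp (hτ.2.1 b)).1

theorem re_apply_star_mul_self_le_norm_sq {A : Type*} [CStarAlgebra A] {τ : A →L[ℂ] ℂ}
    (hτ : IsTracialState τ) (b : A) : (τ (star b * b)).re ≤ ‖b‖ ^ 2 := by
  let := CStarAlgebra.spectralOrder A
  have := CStarAlgebra.spectralOrderedRing A
  have hle : star b * b ≤ algebraMap ℝ A (‖b‖ ^ 2) := CStarAlgebra.star_mul_le_algebraMap_norm_sq
  obtain ⟨c, hc⟩ := CStarAlgebra.nonneg_iff_eq_star_mul_self.mp (sub_nonneg.mpr hle)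
  have hτ_bound : τ (algebraMap ℝ A (‖b‖ ^ 2)) = ((‖b‖ ^ 2 : ℝ) : ℂ) := by
    rw [IsScalarTower.algebraMap_apply ℝ ℂ A, Algebra.algebraMap_eq_smul_one, map_smul, hτ.1,
      smul_eq_mul, mul_one, Complex.coe_algebraMap]
  have hdiff := hτ.re_apply_star_mul_self_nonneg c
  rwa [← hc, map_sub, hτ_bound, Complex.sub_re, Complex.ofReal_re, sub_nonneg] at hdiff

theorem of_mem_traceOrbit {G : Type*} {α : G → A ≃⋆ₐ[ℂ] A} {σ : A →L[ℂ] ℂ}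
    (hτ : IsTracialState τ) (hσ : σ ∈ traceOrbit α τ) : IsTracialState σ :=
  let ⟨g, hg⟩ := hσ
  hτ.of_eq_comp (α g) hg

end IsTracialState

end Traces

section OrbitAverage

variable {A G : Type*} [NormedRing A] [StarRing A] [NormedAlgebra ℂ A]
  {α : G → A ≃⋆ₐ[ℂ] A} {τ : A →L[ℂ] ℂ}

/-- The uniform average of the functionals in a finite orbit of `τ`; for a trace `τ` this is the
invariant trace attached to `τ`. The finiteness proof makes the orbit available as a `Finset`. -/
noncomputable def orbitAverage (hfin : (traceOrbit α τ).Finite) : A →L[ℂ] ℂ :=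
  (hfin.toFinset.card : ℂ)⁻¹ • ∑ σ ∈ hfin.toFinset, σ

theorem orbitAverage_apply (hfin : (traceOrbit α τ).Finite) (a : A) :
    orbitAverage hfin a = (hfin.toFinset.card : ℂ)⁻¹ * ∑ σ ∈ hfin.toFinset, σ a := by
  simp [orbitAverage]

theorem ncard_mul_re_orbitAverage_apply (hfin : (traceOrbit α τ).Finite) (a : A) :
    (traceOrbit α τ).ncard * (orbitAverage hfin a).re = ∑ σ ∈ hfin.toFinset, (σ a).re := by
  rw [Set.ncard_eq_toFinset_card _ hfin, ← Complex.re_ofReal_mul, Complex.ofReal_natCast,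
    orbitAverage_apply, ← Complex.re_sum]
  rcases hfin.toFinset.eq_empty_or_nonempty with hempty | hne
  · simp [hempty]
  · rw [mul_inv_cancel_left₀ (Nat.cast_ne_zero.mpr hne.card_ne_zero)]

theorem IsTracialState.orbitAverage (hτ : IsTracialState τ) (hne : (traceOrbit α τ).Nonempty)
    (hfin : (traceOrbit α τ).Finite) : IsTracialState (orbitAverage hfin) :=
  inv_card_smul_sum_mem_of_convex convex_setOf_isTracialState (hfin.toFinset_nonempty.mpr hne)
    fun _ hσ ↦ hτ.of_mem_traceOrbit (hfin.mem_toFinset.mp hσ)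

end OrbitAverage

open scoped CStarAlgebra in
/-- The functional `τ ∘ φ`, continuous because `*`-homomorphisms of C⋆-algebras are contractive;
for `φ = α g` it is the translate of `τ` by `g`. -/
noncomputable def pullback {A B F : Type*} [NonUnitalCStarAlgebra A] [NonUnitalCStarAlgebra B]
    [FunLike F A B] [NonUnitalAlgHomClass F ℂ A B] [StarHomClass F A B] (φ : F)
    (τ : B →L[ℂ] ℂ) : A →L[ℂ] ℂ :=
  τ.comp ⟨(φ : A →ₗ[ℂ] B), map_continuous φ⟩

section Orbits

variable {A G : Type*} [CStarAlgebra A] {α : G → A ≃⋆ₐ[ℂ] A} {τ : A →L[ℂ] ℂ}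

theorem pullback_mem_traceOrbit (α : G → A ≃⋆ₐ[ℂ] A) (τ : A →L[ℂ] ℂ) (g : G) :
    pullback (α g) τ ∈ traceOrbit α τ :=
  ⟨g, fun _ ↦ rfl⟩

theorem traceOrbit_nonempty [Nonempty G] (α : G → A ≃⋆ₐ[ℂ] A) (τ : A →L[ℂ] ℂ) :
    (traceOrbit α τ).Nonempty :=
  ‹Nonempty G›.elim fun g ↦ ⟨_, pullback_mem_traceOrbit α τ g⟩

theorem bijOn_pullback_traceOrbit [Mul G] (hα : ∀ g h a, α (g * h) a = α g (α h a))
    (hfin : (traceOrbit α τ).Finite) (g : G) :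
    Set.BijOn (pullback (α g)) (traceOrbit α τ) (traceOrbit α τ) := by
  refine (hfin.injOn_iff_bijOn_of_mapsTo ?_).mp ?_
  · rintro σ ⟨h, hσ⟩
    exact ⟨h * g, fun a ↦ (hσ (α g a)).trans (congrArg τ (hα h g a).symm)⟩
  · intro σ _ ρ _ hσρ
    ext a
    obtain ⟨c, rfl⟩ := (α g).surjective a
    exact congrArg (fun ω : A →L[ℂ] ℂ ↦ ω c) hσρ

theorem orbitAverage_map_apply [Mul G] (hα : ∀ g h a, α (g * h) a = α g (α h a))
    (hfin : (traceOrbit α τ).Finite) (g : G) (a : A) :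
    orbitAverage hfin (α g a) = orbitAverage hfin a := by
  have hbij := bijOn_pullback_traceOrbit hα hfin g
  rw [← hfin.coe_toFinset] at hbij
  rw [orbitAverage_apply, orbitAverage_apply]
  congr 1
  exact Finset.sum_nbij _ hbij.mapsTo hbij.injOn hbij.surjOn fun _ _ ↦ rfl

theorem re_apply_map_le_ncard_mul_orbitAverage (hτ : IsTracialState τ)
    (hfin : (traceOrbit α τ).Finite) (g : G) (b : A) :
    (τ (α g (star b * b))).re ≤
      (traceOrbit α τ).ncard * (orbitAverage hfin (star b * b)).re := by
  rw [ncard_mul_re_orbitAverage_apply]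
  exact Finset.single_le_sum (f := fun σ : A →L[ℂ] ℂ ↦ (σ (star b * b)).re)
    (fun σ hσ ↦ (hτ.of_mem_traceOrbit (hfin.mem_toFinset.mp hσ)).re_apply_star_mul_self_nonneg b)
    (hfin.mem_toFinset.mpr (pullback_mem_traceOrbit α τ g))

end Orbits

section Averages

variable {E κ : Type*} [AddCommGroup E] [Module ℂ E] {s : Finset κ} {x : κ → E}

theorem apply_inv_card_smul_sum_eq (f : E →ₗ[ℂ] ℂ) (hs : s.Nonempty) {c : ℂ}
    (hx : ∀ k ∈ s, f (x k) = c) : f ((s.card : ℂ)⁻¹ • ∑ k ∈ s, x k) = c :=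
  inv_card_smul_sum_mem_of_convex
    ((convex_singleton c).linear_preimage (f.restrictScalars ℝ)) hs hx

theorem re_apply_inv_card_smul_sum_le (f : E →ₗ[ℂ] ℂ) (hs : s.Nonempty) {c : ℝ}
    (hx : ∀ k ∈ s, (f (x k)).re ≤ c) : (f ((s.card : ℂ)⁻¹ • ∑ k ∈ s, x k)).re ≤ c :=
  inv_card_smul_sum_mem_of_convex
    ((convex_Iic c).linear_preimage (Complex.reLm ∘ₗ f.restrictScalars ℝ)) hs hx

theorem le_re_apply_inv_card_smul_sum (f : E →ₗ[ℂ] ℂ) (hs : s.Nonempty) {c : ℝ}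
    (hx : ∀ k ∈ s, c ≤ (f (x k)).re) : c ≤ (f ((s.card : ℂ)⁻¹ • ∑ k ∈ s, x k)).re :=
  inv_card_smul_sum_mem_of_convex
    ((convex_Ici c).linear_preimage (Complex.reLm ∘ₗ f.restrictScalars ℝ)) hs hx

end Averages

theorem bddAbove_iInf_re_apply_star_mul_self {A ι : Type*} [CStarAlgebra A] [Nonempty ι]
    (b : ι → A) : BddAbove {r : ℝ | ∃ τ : A →L[ℂ] ℂ, IsTracialState τ ∧
      r = ⨅ j, (τ (star (b j) * b j)).re} := by
  obtain ⟨i⟩ := ‹Nonempty ι›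
  refine ⟨‖b i‖ ^ 2, ?_⟩
  rintro _ ⟨τ, hτ, rfl⟩
  have hbdd : BddBelow (Set.range fun j ↦ (τ (star (b j) * b j)).re) :=
    ⟨0, Set.forall_mem_range.mpr fun j ↦ hτ.re_apply_star_mul_self_nonneg (b j)⟩
  exact (ciInf_le hbdd i).trans (hτ.re_apply_star_mul_self_le_norm_sq (b i))

section AveragedTranslates

variable {A G κ : Type*} [CStarAlgebra A] {α : G → A ≃⋆ₐ[ℂ] A} {τ : A →L[ℂ] ℂ} {K : Finset κ}

theorem re_apply_average_map_nonneg (hτ : IsTracialState τ) (hK : K.Nonempty) (g : κ → G) (b : A) :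
    0 ≤ (τ ((K.card : ℂ)⁻¹ • ∑ k ∈ K, α (g k) (star b * b))).re :=
  le_re_apply_inv_card_smul_sum (τ : A →ₗ[ℂ] ℂ) hK fun k _ ↦
    (hτ.of_mem_traceOrbit (pullback_mem_traceOrbit α τ (g k))).re_apply_star_mul_self_nonneg b

theorem re_apply_average_map_le (hτ : IsTracialState τ) (hfin : (traceOrbit α τ).Finite)
    {M : ℕ} (hM : (traceOrbit α τ).ncard ≤ M) (hK : K.Nonempty) (g : κ → G) (b : A) :
    (τ ((K.card : ℂ)⁻¹ • ∑ k ∈ K, α (g k) (star b * b))).re ≤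
      M * (orbitAverage hfin (star b * b)).re := by
  refine re_apply_inv_card_smul_sum_le (τ : A →ₗ[ℂ] ℂ) hK fun k _ ↦ ?_
  have hσ := hτ.orbitAverage ⟨_, pullback_mem_traceOrbit α τ (g k)⟩ hfin
  refine (re_apply_map_le_ncard_mul_orbitAverage hτ hfin (g k) b).trans ?_
  gcongr
  exact hσ.re_apply_star_mul_self_nonneg b

theorem iInf_re_apply_average_map_le {ι : Type*} (hτ : IsTracialState τ)
    (hfin : (traceOrbit α τ).Finite) {M : ℕ} (hM : (traceOrbit α τ).ncard ≤ M)
    (hK : K.Nonempty) (g : κ → G) (b : ι → A) :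
    ⨅ j, (τ ((K.card : ℂ)⁻¹ • ∑ k ∈ K, α (g k) (star (b j) * b j))).re ≤
      M * ⨅ j, (orbitAverage hfin (star (b j) * b j)).re := by
  rw [Real.mul_iInf_of_nonneg M.cast_nonneg]
  refine ciInf_mono ⟨0, Set.forall_mem_range.mpr fun j ↦ ?_⟩ fun j ↦ ?_
  · exact re_apply_average_map_nonneg hτ hK g (b j)
  · exact re_apply_average_map_le hτ hfin hM hK g (b j)

end AveragedTranslates

theorem stmt4_general {A G ι κ : Type*} [CStarAlgebra A] [Mul G] [Nonempty ι]
    (α : G → A ≃⋆ₐ[ℂ] A) (hα : ∀ (g h : G) (a : A), α (g * h) a = α g (α h a))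
    (hTA : ∃ τ : A →L[ℂ] ℂ, IsTracialState τ) (M : ℕ)
    (horb : ∀ τ : A →L[ℂ] ℂ, IsTracialState τ →
      (traceOrbit α τ).Finite ∧ (traceOrbit α τ).ncard ≤ M)
    (K : Finset κ) (hK : K.Nonempty) (g : κ → G) (a : ι → A)
    (hpos : ∀ j, ∃ b : A, a j = star b * b) (δ : ℝ)
    (hsup : sSup {r : ℝ | ∃ τ : A →L[ℂ] ℂ, IsTracialState τ ∧
        (∀ (g : G) (c : A), τ (α g c) = τ c) ∧ r = ⨅ j, (τ (a j)).re} < δ)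
    (a' : ι → A) (ha' : ∀ j, a' j = (K.card : ℂ)⁻¹ • ∑ k ∈ K, α (g k) (a j)) :
    (∀ τ : A →L[ℂ] ℂ, (∀ (g : G) (c : A), τ (α g c) = τ c) → ∀ j, τ (a' j) = τ (a j)) ∧
      sSup {r : ℝ | ∃ τ : A →L[ℂ] ℂ, IsTracialState τ ∧ r = ⨅ j, (τ (a' j)).re} < M * δ := by
  have : Nonempty G := hK.nonempty.map g
  choose b hb using hpos
  obtain rfl : a = fun j ↦ star (b j) * b j := funext hb
  obtain rfl : a' = _ := funext ha'
  refine ⟨fun τ hinv j ↦ apply_inv_card_smul_sum_eq (τ : A →ₗ[ℂ] ℂ) hK fun k _ ↦ hinv _ _, ?_⟩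
  obtain ⟨τ₀, hτ₀⟩ := hTA
  have hM : 0 < M := ((Set.ncard_pos (horb τ₀ hτ₀).1).mpr (traceOrbit_nonempty α τ₀)).trans_le
    (horb τ₀ hτ₀).2
  refine lt_of_le_of_lt (csSup_le ⟨_, τ₀, hτ₀, rfl⟩ ?_)
    (mul_lt_mul_of_pos_left hsup (Nat.cast_pos.mpr hM))
  rintro _ ⟨τ, hτ, rfl⟩
  obtain ⟨hfin, hcard⟩ := horb τ hτ
  refine (iInf_re_apply_average_map_le hτ hfin hcard hK g b).trans ?_
  gcongr
  refine le_csSup ((bddAbove_iInf_re_apply_star_mul_self b).mono ?_)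
    ⟨_, hτ.orbitAverage (traceOrbit_nonempty α τ) hfin, orbitAverage_map_apply hα hfin, rfl⟩
  exact fun _ ⟨σ, hσ, _, hr⟩ ↦ ⟨σ, hσ, hr⟩

/-- Let `A` be a unital C*-algebra with `T(A) ≠ ∅`, let `α` be an action
of a discrete group `G` on `A` whose induced action on `T(A)` has orbits of cardinality at
most `M ≥ 1`.  Let `K ⊆ G` be finite nonempty, `a 0, …, a (n-1)` positive elements, and
`δ > 0` with `sup_{τ ∈ T(A)^α} minⱼ τ(aⱼ) < δ`.  With `a'ⱼ = |K|⁻¹ ∑_{k ∈ K} α_{k⁻¹}(aⱼ)`: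
(i) `τ(a'ⱼ) = τ(aⱼ)` for every invariant trace `τ`; (ii)
`sup_{τ ∈ T(A)} minⱼ τ(a'ⱼ) < M δ`. -/
theorem stmt4 {A : Type*} [NormedRing A] [StarRing A] [CStarRing A]
    [NormedAlgebra ℂ A] [CompleteSpace A] [StarModule ℂ A]
    {G : Type*} [Group G]
    (α : G → A ≃⋆ₐ[ℂ] A)
    (hα1 : ∀ a : A, α 1 a = a)
    (hαmul : ∀ (g h : G) (a : A), α (g * h) a = α g (α h a))
    (hTA : ∃ τ : A →L[ℂ] ℂ, IsTracialState τ)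
    (M : ℕ) (hM : 1 ≤ M)
    (horb : ∀ τ : A →L[ℂ] ℂ, IsTracialState τ →
      (traceOrbit α τ).Finite ∧ (traceOrbit α τ).ncard ≤ M)
    (K : Finset G) (hK : K.Nonempty)
    (n : ℕ) (hn : 1 ≤ n) (a : Fin n → A)
    (hpos : ∀ j, ∃ b : A, a j = star b * b)
    (δ : ℝ) (hδ : 0 < δ)
    (hsup : sSup {r : ℝ | ∃ τ : A →L[ℂ] ℂ, IsTracialState τ ∧
        (∀ (g : G) (c : A), τ (α g c) = τ c) ∧ r = ⨅ j, (τ (a j)).re} < δ)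
    (a' : Fin n → A)
    (ha' : ∀ j, a' j = (K.card : ℂ)⁻¹ • ∑ k ∈ K, α k⁻¹ (a j)) :
    (∀ (τ : A →L[ℂ] ℂ), IsTracialState τ → (∀ (g : G) (c : A), τ (α g c) = τ c) →
        ∀ j, τ (a' j) = τ (a j)) ∧
      sSup {r : ℝ | ∃ τ : A →L[ℂ] ℂ, IsTracialState τ ∧ r = ⨅ j, (τ (a' j)).re}
        < M * δ := by
  let : CStarAlgebra A := { }
  have : Nonempty (Fin n) := ⟨⟨0, hn⟩⟩
  obtain ⟨invariant, bound⟩ :=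
    stmt4_general α hαmul hTA M horb K hK (·⁻¹) a hpos δ hsup a' ha'
  exact ⟨fun τ _ hτ ↦ invariant τ hτ, bound⟩
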